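/- arXiv:1410.4749 — 3 statements merged into one kernel-verified Lean document; each statement's English description precedes it below -/
import Mathlib

section
/- Let (Z, A, ν) be a finite measure space, E a real Hilbert space, and M > 0, R > 0. Let qₙ, q : Z → ℝ be measurable with |qₙ(z)| ≤ M and |q(z)| ≤ M for ν-a.e. z and all n, and suppose qₙ → q ν-almost everywhere. Let Gₙ, G ∈ L²(ν; E) satisfy ‖Gₙ‖_{L²(ν;E)} ≤ R for all n and Gₙ ⇀ G weakly in L²(ν; E), i.e. ∫_Z ⟨Gₙ(z), W(z)⟩_E dν → ∫_Z ⟨G(z), W(z)⟩_E dν for every W ∈ L²(ν; E). Then for every V ∈ L²(ν; E), ∫_Z qₙ(z) ⟨Gₙ(z), V(z)⟩_E dν → ∫_Z q(z) ⟨G(z), V(z)⟩_E dν. -/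
/-!
Write `qₙ ⟪Gₙ, V⟫ = ⟪Gₙ, qₙ V⟫`, so that both integrals are inner products in the Hilbert space
`L²(ν; E)`. Since `|qₙ - q| ≤ 2M` and `qₙ → q` a.e., dominated convergence gives `qₙ V → q V`
strongly in `L²` (`tendsto_norm_toLp_smul_zero`). The pairing of the bounded weakly convergent
sequence `Gₙ` with a strongly convergent one then converges: `⟪Gₙ, (qₙ - q) V⟫ → 0` by
Cauchy–Schwarz, and `⟪Gₙ, q V⟫ → ⟪G, q V⟫` by weak convergence against the test function `q V`.
-/

open MeasureTheory Filter
open scoped RealInnerProductSpace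

section Helpers

variable {Z : Type*} [MeasurableSpace Z] {ν : Measure Z}
  {E : Type*} [NormedAddCommGroup E] [InnerProductSpace ℝ E]

lemma memLp_smul_of_bound {a : Z → ℝ} {C : ℝ} (ha : Measurable a)
    (hbd : ∀ᵐ z ∂ν, |a z| ≤ C) (V : Lp E 2 ν) :
    MemLp (fun z => a z • V z) 2 ν := by
  refine (Lp.memLp V).of_le_mul (c := C)
    (ha.aestronglyMeasurable.smul (Lp.aestronglyMeasurable V)) ?_
  filter_upwards [hbd] with z hz
  rw [norm_smul, Real.norm_eq_abs]
  gcongr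

lemma inner_toLp_smul {a : Z → ℝ} (V W : Lp E 2 ν)
    (h : MemLp (fun z => a z • V z) 2 ν) :
    ⟪W, h.toLp⟫ = ∫ z, a z * ⟪W z, V z⟫ ∂ν := by
  rw [L2.inner_def]
  refine integral_congr_ae ?_
  filter_upwards [h.coeFn_toLp] with z hz
  rw [hz, real_inner_smul_right]

/-- Multiplication by uniformly bounded coefficients tending to zero a.e. tends to zero strongly
in `L²`, by dominated convergence with majorant `C² ‖V‖²`. -/
lemma tendsto_norm_toLp_smul_zero {a : ℕ → Z → ℝ} {C : ℝ} (ha : ∀ n, Measurable (a n))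
    (hbd : ∀ n, ∀ᵐ z ∂ν, |a n z| ≤ C)
    (hlim : ∀ᵐ z ∂ν, Tendsto (fun n => a n z) atTop (nhds 0)) (V : Lp E 2 ν) :
    Tendsto (fun n => ‖(memLp_smul_of_bound (ha n) (hbd n) V).toLp‖) atTop (nhds 0) := by
  have hsq : ∀ n, ‖(memLp_smul_of_bound (ha n) (hbd n) V).toLp‖ ^ 2
      = ∫ z, a n z ^ 2 * ⟪V z, V z⟫ ∂ν := by
    intro n
    rw [← real_inner_self_eq_norm_sq, L2.inner_def]
    refine integral_congr_ae ?_
    filter_upwards [(memLp_smul_of_bound (ha n) (hbd n) V).coeFn_toLp] with z hz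
    rw [hz, real_inner_smul_right, real_inner_smul_left]
    ring
  have hVV := L2.integrable_inner (𝕜 := ℝ) V V
  have hint : Tendsto (fun n => ∫ z, a n z ^ 2 * ⟪V z, V z⟫ ∂ν) atTop
      (nhds (∫ _z, (0 : ℝ) ∂ν)) := by
    refine tendsto_integral_of_dominated_convergence (fun z => C ^ 2 * ⟪V z, V z⟫)
      (fun n => ((ha n).pow_const 2).aestronglyMeasurable.mul hVV.aestronglyMeasurable)
      (hVV.const_mul _) (fun n => ?_) ?_
    · filter_upwards [hbd n] with z hz
      have hV : 0 ≤ ⟪V z, V z⟫ := real_inner_self_nonneg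
      rw [Real.norm_of_nonneg (by positivity), ← sq_abs (a n z)]
      gcongr
    · filter_upwards [hlim] with z hz
      simpa using (hz.pow 2).mul_const ⟪V z, V z⟫
  have hroot := hint.sqrt
  simp_rw [← hsq, Real.sqrt_sq (norm_nonneg _)] at hroot
  simpa using hroot

end Helpers

/-- Passing to the limit in the weak form: uniformly bounded scalar coefficients
converging a.e., against a weakly convergent bounded sequence in `L²(ν; E)`. -/
theorem stmt3
    {Z : Type*} [MeasurableSpace Z] (ν : Measure Z) [IsFiniteMeasure ν]
    {E : Type*} [NormedAddCommGroup E] [InnerProductSpace ℝ E] [CompleteSpace E]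
    (M R : ℝ) (hM : 0 < M) (hR : 0 < R)
    (q : ℕ → Z → ℝ) (qlim : Z → ℝ)
    (hqmeas : ∀ n, Measurable (q n)) (hqlimmeas : Measurable qlim)
    (hqbd : ∀ n, ∀ᵐ z ∂ν, |q n z| ≤ M) (hqlimbd : ∀ᵐ z ∂ν, |qlim z| ≤ M)
    (hqconv : ∀ᵐ z ∂ν, Tendsto (fun n => q n z) atTop (nhds (qlim z)))
    (G : ℕ → Lp E 2 ν) (Glim : Lp E 2 ν)
    (hGbd : ∀ n, ‖G n‖ ≤ R)
    (hGweak : ∀ W : Lp E 2 ν,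
      Tendsto (fun n => ∫ z, ⟪(G n) z, W z⟫ ∂ν) atTop
        (nhds (∫ z, ⟪Glim z, W z⟫ ∂ν))) :
    ∀ V : Lp E 2 ν,
      Tendsto (fun n => ∫ z, q n z * ⟪(G n) z, V z⟫ ∂ν) atTop
        (nhds (∫ z, qlim z * ⟪Glim z, V z⟫ ∂ν)) := by
  intro V
  have hdmeas : ∀ n, Measurable (fun z => q n z - qlim z) := fun n => (hqmeas n).sub hqlimmeas
  have hdbd : ∀ n, ∀ᵐ z ∂ν, |q n z - qlim z| ≤ M + M := by
    intro n
    filter_upwards [hqbd n, hqlimbd] with z h1 h2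
    exact (abs_sub _ _).trans (add_le_add h1 h2)
  have hdlim : ∀ᵐ z ∂ν, Tendsto (fun n => q n z - qlim z) atTop (nhds 0) := by
    filter_upwards [hqconv] with z hz
    simpa using hz.sub_const (qlim z)
  have hD := fun n => memLp_smul_of_bound (hdmeas n) (hdbd n) V
  have hQ := memLp_smul_of_bound hqlimmeas hqlimbd V
  have hsplit : ∀ n, ∫ z, q n z * ⟪(G n) z, V z⟫ ∂ν
      = ⟪G n, (hD n).toLp⟫ + ⟪G n, hQ.toLp⟫ := by
    intro n
    rw [← inner_add_right, ← MemLp.toLp_add, L2.inner_def]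
    refine integral_congr_ae ?_
    filter_upwards [((hD n).add hQ).coeFn_toLp] with z hz
    rw [hz, Pi.add_apply, ← add_smul, sub_add_cancel, real_inner_smul_right]
  have hfirst : Tendsto (fun n => ⟪G n, (hD n).toLp⟫) atTop (nhds 0) := by
    refine squeeze_zero_norm (a := fun n => R * ‖(hD n).toLp‖) (fun n => ?_) ?_
    · exact (norm_inner_le_norm _ _).trans (by gcongr; exact hGbd n)
    · simpa using (tendsto_norm_toLp_smul_zero hdmeas hdbd hdlim V).const_mul R
  have hsecond : Tendsto (fun n => ⟪G n, hQ.toLp⟫) atTop (nhds ⟪Glim, hQ.toLp⟫) :=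
    hGweak hQ.toLp
  simp_rw [hsplit]
  rw [← inner_toLp_smul V Glim hQ]
  simpa using hfirst.add hsecond
end

section
/- Let H be a real Hilbert space, X a nonempty set, J : X → ℝ, and e : X → H. Suppose x* ∈ X satisfies e(x*) = 0 and J(x*) ≤ J(x) for every x ∈ X with e(x) = 0. Suppose further that (i) the set S = { (J(x) − J(x*) + s, e(x)) : x ∈ X, s ≥ 0 } ⊆ ℝ × H is convex and has nonempty interior (in the product of the standard topology on ℝ and the norm topology on H), and (ii) for every λ ∈ H there exists x_λ ∈ X with ⟨e(x_λ), λ⟩_H = −‖λ‖²_H. Then there exists λ* ∈ H such that, with L(x, λ) := J(x) + ⟨e(x), λ⟩_H, the saddle point condition L(x*, μ) ≤ L(x*, λ*) ≤ L(x, λ*) holds for all x ∈ X and all μ ∈ H. -/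
/-!
The point `(0, 0)` is not interior to `S`: otherwise some `(-t, 0)` with `t > 0` would lie in `S`,
giving a feasible `x` with `J x < J xstar`. Hahn–Banach therefore provides a nonzero continuous
functional `(r, h) ↦ r * a + ⟪g, h⟫`, with `g` its Riesz representative on `H`, that is
nonpositive on `S`. As `(1, 0) ∈ S`, `a ≤ 0`. If `a = 0`, solvability at `-g` forces `‖g‖² ≤ 0`, so
the functional vanishes, a contradiction. Hence `a < 0`, and dividing by `a` gives the multiplier
`a⁻¹ • g`. The left inequality of the saddle point condition is an equality by feasibility.
-/

open scoped RealInnerProductSpace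

/-- Abstract saddle point condition via Hahn–Banach separation: for a minimizer
`x*` of `J` subject to `e(x) = 0`, under convexity and nonempty interior of the
perturbation set `S` and solvability of the modified equation, there is a
Lagrange multiplier `λ*` with `L(x*, μ) ≤ L(x*, λ*) ≤ L(x, λ*)`. -/
theorem stmt4
    {H : Type*} [NormedAddCommGroup H] [InnerProductSpace ℝ H] [CompleteSpace H]
    {X : Type*} [Nonempty X]
    (J : X → ℝ) (e : X → H) (xstar : X)
    (hfeas : e xstar = 0)
    (hopt : ∀ x : X, e x = 0 → J xstar ≤ J x)
    (S : Set (ℝ × H))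
    (hS : S = {p : ℝ × H | ∃ (x : X) (s : ℝ), 0 ≤ s ∧ p = (J x - J xstar + s, e x)})
    (hSconv : Convex ℝ S) (hSint : (interior S).Nonempty)
    (hsolv : ∀ l : H, ∃ x : X, ⟪e x, l⟫ = -‖l‖^2) :
    ∃ lstar : H, ∀ (x : X) (m : H),
      J xstar + ⟪e xstar, m⟫ ≤ J xstar + ⟪e xstar, lstar⟫ ∧
      J xstar + ⟪e xstar, lstar⟫ ≤ J x + ⟪e x, lstar⟫ := by
  have hmem : ∀ x : X, ∀ s : ℝ, 0 ≤ s → (J x - J xstar + s, e x) ∈ S := by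
    intro x s hs
    rw [hS]
    exact ⟨x, s, hs, rfl⟩
  have h0 : (0 : ℝ × H) ∉ interior S := by
    intro h
    rw [mem_interior_iff_mem_nhds, Metric.mem_nhds_iff] at h
    obtain ⟨ε, hε, hball⟩ := h
    have hm : ((-(ε / 2), 0) : ℝ × H) ∈ S := by
      apply hball
      rw [mem_ball_zero_iff, Prod.norm_mk, norm_zero, norm_neg, Real.norm_of_nonneg (by positivity)]
      exact max_lt (by linarith) hε
    rw [hS] at hm
    obtain ⟨x, s, hs, hx⟩ := hm
    obtain ⟨h1, h2⟩ := Prod.mk.inj hx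
    have := hopt x h2.symm
    linarith
  obtain ⟨f, hf, hfS⟩ := geometric_hahn_banach_of_nonempty_interior_point hSconv h0 hSint
  simp only [map_zero] at hfS
  set a : ℝ := f (1, 0) with ha
  set g : H := (InnerProductSpace.toDual ℝ H).symm (f.comp (ContinuousLinearMap.inr ℝ ℝ H)) with hg
  have hrep : ∀ (r : ℝ) (h : H), f (r, h) = r * a + ⟪h, g⟫ := by
    intro r h
    have e1 : ((r, h) : ℝ × H) = r • ((1, 0) : ℝ × H) + (0, h) := by simp
    rw [e1, map_add, map_smul, real_inner_comm, hg, InnerProductSpace.toDual_symm_apply]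
    simp [ha]
  have hle : ∀ x : X, ∀ s : ℝ, 0 ≤ s → (J x - J xstar + s) * a + ⟪e x, g⟫ ≤ 0 := by
    intro x s hs
    rw [← hrep]
    exact hfS _ (hmem x s hs)
  have ha0 : a ≤ 0 := by
    have := hle xstar 1 zero_le_one
    simpa [hfeas] using this
  have hane : a ≠ 0 := by
    intro haz
    obtain ⟨x, hx⟩ := hsolv (-g)
    have h1 := hle x 0 le_rfl
    rw [inner_neg_right, norm_neg] at hx
    rw [haz, mul_zero, zero_add] at h1
    have hg0 : g = 0 := by
      rw [← norm_eq_zero, ← sq_eq_zero_iff]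
      exact le_antisymm (by linarith) (sq_nonneg _)
    apply hf
    ext p <;> simp [hrep, haz, hg0]
  have halt : a < 0 := lt_of_le_of_ne ha0 hane
  refine ⟨a⁻¹ • g, fun x m => ⟨by simp [hfeas], ?_⟩⟩
  have h1 := mul_nonneg_of_nonpos_of_nonpos (inv_nonpos.mpr ha0) (hle x 0 le_rfl)
  have h2 : a⁻¹ * ((J x - J xstar + 0) * a + ⟪e x, g⟫) = J x - J xstar + a⁻¹ * ⟪e x, g⟫ := by
    field_simp
    ring
  rw [hfeas, inner_zero_left, inner_smul_right]
  linarith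
end

section
/- Let H be a real Hilbert space, D a topological space, and T : H → BC(D) a continuous linear map into the bounded continuous real-valued functions on D with operator norm at most C, where C ≥ 1. Let (Ω, F, μ) be a probability space, let 0 < q_min < q_max, and let q ∈ L²(μ; H) satisfy, for μ-a.e. ω: T(q(ω))(x) ≥ q_min for all x ∈ D and ‖q(ω)‖_H ≤ q_max. Let k ≥ 1 and let p ∈ L²(μ; H) satisfy ‖p − q‖²_{L²(μ;H)} ≤ 1/(C² k³). Define A = { ω ∈ Ω : T(p(ω))(x) ≥ q_min − 1/k for all x ∈ D, and ‖p(ω)‖_H ≤ q_max + 1/k }. Then μ(Ω \ A) ≤ 1/k. -/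
open MeasureTheory

/-! By Chebyshev's inequality the event `‖p - q‖_H ≥ 1/(Ck)` has probability at most
`(Ck)² ‖p - q‖² ≤ (Ck)² / (C²k³) = 1/k`. Off this event, and where `q` is feasible, `‖T‖ ≤ C`
gives `|T(p) - T(q)| ≤ 1/k` uniformly on `D`, and `C ≥ 1` gives `‖p - q‖_H ≤ 1/k`, so `p`
satisfies the relaxed constraints. -/

/-- Chebyshev-type feasibility estimate: if `p` is close to the feasible `q` in
`L²(μ; H)` (within `1/(C²k³)`), then `p` satisfies the relaxed constraints
except on an event of probability at most `1/k`. -/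
theorem stmt6
    {H : Type*} [NormedAddCommGroup H] [InnerProductSpace ℝ H] [CompleteSpace H]
    {D : Type*} [TopologicalSpace D]
    (T : H →L[ℝ] BoundedContinuousFunction D ℝ)
    (C : ℝ) (hC : 1 ≤ C) (hTnorm : ‖T‖ ≤ C)
    {Ω : Type*} [MeasurableSpace Ω] (μ : Measure Ω) [IsProbabilityMeasure μ]
    (qmin qmax : ℝ) (h0 : 0 < qmin) (h1 : qmin < qmax)
    (q p : Lp H 2 μ)
    (hq : ∀ᵐ ω ∂μ, (∀ x : D, qmin ≤ T (q ω) x) ∧ ‖q ω‖ ≤ qmax)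
    (k : ℝ) (hk : 1 ≤ k)
    (hclose : ‖p - q‖^2 ≤ 1 / (C^2 * k^3)) :
    μ ({ω : Ω | (∀ x : D, qmin - 1/k ≤ T (p ω) x) ∧ ‖p ω‖ ≤ qmax + 1/k}ᶜ)
      ≤ ENNReal.ofReal (1/k) := by
  have hk0 : 0 < k := by linarith
  have hC0 : 0 < C := by linarith
  have hCk : 0 < 1 / (C * k) := by positivity
  -- Chebyshev in squared form: `(1/(Ck))² μ(‖p(ω) - q(ω)‖ ≥ 1/(Ck)) ≤ ‖p - q‖²`.
  have cheb : ENNReal.ofReal (1 / (C * k)) ^ 2 *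
      μ {ω | ENNReal.ofReal (1 / (C * k)) ≤ ‖(p - q : Lp H 2 μ) ω‖ₑ}
        ≤ ENNReal.ofReal (‖p - q‖ ^ 2) := by
    have h := mul_meas_ge_le_pow_eLpNorm' μ (p := 2) (by simp) (by simp)
      (Lp.aestronglyMeasurable (p - q)) (ENNReal.ofReal (1 / (C * k)))
    rw [← Lp.enorm_def, ← ofReal_norm] at h
    rw [ENNReal.ofReal_pow (norm_nonneg _)]
    simpa using h
  have hsub : μ ({ω : Ω | (∀ x : D, qmin - 1/k ≤ T (p ω) x) ∧ ‖p ω‖ ≤ qmax + 1/k}ᶜ)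
      ≤ μ {ω | ENNReal.ofReal (1 / (C * k)) ≤ ‖(p - q : Lp H 2 μ) ω‖ₑ} := by
    apply measure_mono_ae
    filter_upwards [hq, Lp.coeFn_sub p q] with ω hω hs hbad
    by_contra hfar
    apply hbad
    have hd : ‖p ω - q ω‖ < 1 / (C * k) := by
      have h : ¬ ENNReal.ofReal (1 / (C * k)) ≤ ‖(p - q : Lp H 2 μ) ω‖ₑ := hfar
      rw [hs, Pi.sub_apply, ← ofReal_norm, not_le,
        ENNReal.ofReal_lt_ofReal_iff hCk] at h
      exact h
    have hCd : C * ‖p ω - q ω‖ ≤ 1 / k := by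
      calc C * ‖p ω - q ω‖ ≤ C * (1 / (C * k)) := by gcongr
        _ = 1 / k := by field_simp
    refine ⟨fun x => ?_, ?_⟩
    · have hT : |T (p ω) x - T (q ω) x| ≤ 1 / k := by
        calc |T (p ω) x - T (q ω) x| = ‖T (p ω - q ω) x‖ := by simp
          _ ≤ ‖T (p ω - q ω)‖ := BoundedContinuousFunction.norm_coe_le_norm _ x
          _ ≤ C * ‖p ω - q ω‖ := T.le_of_opNorm_le hTnorm _
          _ ≤ 1 / k := hCd
      linarith [hω.1 x, (abs_le.mp hT).1]
    · -- `C ≥ 1` is what makes the same radius control the `H`-norm.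
      have hn : ‖p ω - q ω‖ ≤ 1 / k := by nlinarith [norm_nonneg (p ω - q ω)]
      linarith [hω.2, norm_le_norm_add_norm_sub' (p ω) (q ω)]
  refine hsub.trans ?_
  rw [← ENNReal.ofReal_pow hCk.le] at cheb
  have hpos : 0 < (1 / (C * k)) ^ 2 := by positivity
  rw [← ENNReal.mul_le_mul_iff_right (ENNReal.ofReal_pos.mpr hpos).ne' ENNReal.ofReal_ne_top,
    ← ENNReal.ofReal_mul hpos.le]
  refine cheb.trans (ENNReal.ofReal_le_ofReal (hclose.trans_eq ?_))
  field_simp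
end
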